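/- arXiv:math/0602577 — 7 statements merged into one kernel-verified Lean document; each statement's English description precedes it below -/
import Mathlib

section
/- Let μ ∈ (0,1), q₁, A₂, n, W₁ ∈ ℝ, and let x, y : ℝ → ℝ be twice differentiable functions such that for every t, r₁(t) := √((x(t)+μ)² + y(t)²) > 0 and r₂(t) := √((x(t)+μ−1)² + y(t)²) > 0, and such that the equations of motion hold: ẍ − 2nẏ = n²x − (1−μ)q₁(x+μ)/r₁³ − μ(x+μ−1)/r₂³ − (3/2)μA₂(x+μ−1)/r₂⁵ + F_x and ÿ + 2nẋ = n²y − (1−μ)q₁y/r₁³ − μy/r₂³ − (3/2)μA₂y/r₂⁵ + F_y, where F_x = −(W₁/r₁²){(x+μ)[(x+μ)ẋ + yẏ]/r₁² + ẋ − ny} and F_y = −(W₁/r₁²){y[(x+μ)ẋ + yẏ]/r₁² + ẏ + n(x+μ)}. Then the Jacobi function C(t) := 2U₁(x(t),y(t)) − ẋ(t)² − ẏ(t)², with U₁(x,y) = (n²/2)(x² + y²) + (1−μ)q₁/r₁ + μ/r₂ + μA₂/(2r₂³), is differentiable and satisfies C′(t) = −2(ẋ(t)F_x(t) + ẏ(t)F_y(t))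 for every t. -/
/-!
Differentiating `C = 2 U₁ - ẋ² - ẏ²` along the motion gives `2 (∇U₁ · v) - 2 (v · a)`. The equations
of motion say `a = ∇U₁ + 2n (ẏ, -ẋ) + F`; the Coriolis term is orthogonal to `v`, so only
`-2 (v · F)` survives, whatever the force `F` is.
-/

/-- The effective potential `U₁` of the photogravitational restricted three-body problem, in the
frame rotating with mean motion `n`: the primaries, of masses `1 - μ` (radiating, with radiation
factor `q₁`) and `μ` (oblate, with coefficient `A₂`), sit at `(-μ, 0)` and `(1 - μ, 0)`. -/
noncomputable def effectivePotential (μ q₁ A₂ n x y : ℝ) : ℝ :=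
  n ^ 2 / 2 * (x ^ 2 + y ^ 2) + (1 - μ) * q₁ / √((x + μ) ^ 2 + y ^ 2)
    + μ / √((x + μ - 1) ^ 2 + y ^ 2) + μ * A₂ / (2 * √((x + μ - 1) ^ 2 + y ^ 2) ^ 3)

section Calculus

variable {t : ℝ}

lemma hasDerivAt_sq_add_sq {u v : ℝ → ℝ} {u' v' : ℝ}
    (hu : HasDerivAt u u' t) (hv : HasDerivAt v v' t) :
    HasDerivAt (fun s ↦ u s ^ 2 + v s ^ 2) (2 * (u t * u' + v t * v')) t :=
  ((hu.fun_pow 2).fun_add (hv.fun_pow 2)).congr_deriv (by ring)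

lemma hasDerivAt_inv_sqrt_pow {w : ℝ → ℝ} {w' : ℝ}
    (hw : HasDerivAt w w' t) (hpos : 0 < w t) (k : ℕ) :
    HasDerivAt (fun s ↦ (√(w s) ^ k)⁻¹) (-(k * w') / (2 * √(w t) ^ (k + 2))) t := by
  have hsqrt : √(w t) ≠ 0 := (Real.sqrt_pos.2 hpos).ne'
  refine (((hw.sqrt hpos.ne').fun_pow k).fun_inv (pow_ne_zero k hsqrt)).congr_deriv ?_
  cases k with
  | zero => simp
  | succ k =>
    rw [Nat.add_sub_cancel]
    field_simp
    ring

lemma hasDerivAt_inv_sqrt_sq_add_sq_pow {u v : ℝ → ℝ} {u' v' : ℝ}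
    (hu : HasDerivAt u u' t) (hv : HasDerivAt v v' t) (hpos : 0 < u t ^ 2 + v t ^ 2) (k : ℕ) :
    HasDerivAt (fun s ↦ (√(u s ^ 2 + v s ^ 2) ^ k)⁻¹)
      (-(k * (u t * u' + v t * v')) / √(u t ^ 2 + v t ^ 2) ^ (k + 2)) t :=
  (hasDerivAt_inv_sqrt_pow (hasDerivAt_sq_add_sq hu hv) hpos k).congr_deriv
    (by field_simp)

end Calculus

lemma hasDerivAt_effectivePotential {x y : ℝ → ℝ} {μ x' y' r₁ r₂ t : ℝ} (q₁ A₂ n : ℝ)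
    (hx : HasDerivAt x x' t) (hy : HasDerivAt y y' t)
    (hr₁ : r₁ = √((x t + μ) ^ 2 + y t ^ 2)) (hr₂ : r₂ = √((x t + μ - 1) ^ 2 + y t ^ 2))
    (hr₁pos : 0 < r₁) (hr₂pos : 0 < r₂) :
    HasDerivAt (fun s ↦ effectivePotential μ q₁ A₂ n (x s) (y s))
      ((n ^ 2 * x t - (1 - μ) * q₁ * (x t + μ) / r₁ ^ 3 - μ * (x t + μ - 1) / r₂ ^ 3
          - 3 / 2 * μ * A₂ * (x t + μ - 1) / r₂ ^ 5) * x'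
        + (n ^ 2 * y t - (1 - μ) * q₁ * y t / r₁ ^ 3 - μ * y t / r₂ ^ 3
          - 3 / 2 * μ * A₂ * y t / r₂ ^ 5) * y') t := by
  subst hr₁ hr₂
  have hcentrifugal := (hasDerivAt_sq_add_sq hx hy).const_mul (n ^ 2 / 2)
  have hinv₁ := hasDerivAt_inv_sqrt_sq_add_sq_pow (hx.add_const μ) hy (Real.sqrt_pos.1 hr₁pos)
  have hinv₂ := hasDerivAt_inv_sqrt_sq_add_sq_pow ((hx.add_const μ).sub_const 1) hy
    (Real.sqrt_pos.1 hr₂pos)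
  have hsum := ((hcentrifugal.fun_add ((hinv₁ 1).const_mul ((1 - μ) * q₁))).fun_add
    ((hinv₂ 1).const_mul μ)).fun_add ((hinv₂ 3).const_mul (μ * A₂ / 2))
  refine (hsum.congr_deriv ?_).congr_of_eventuallyEq (.of_forall fun s ↦ ?_)
  · push_cast
    ring
  · simp only [effectivePotential]
    ring

/-- In a frame rotating with angular velocity `n`, `(gx, gy)` is the gradient of the effective
potential, whose value along the motion is `V`, and `(Fx, Fy)` is the remaining force. -/
lemma hasDerivAt_jacobi {V vx vy : ℝ → ℝ} {n ax ay gx gy Fx Fy t : ℝ}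
    (hV : HasDerivAt V (gx * vx t + gy * vy t) t)
    (hvx : HasDerivAt vx ax t) (hvy : HasDerivAt vy ay t)
    (heqx : ax - 2 * n * vy t = gx + Fx) (heqy : ay + 2 * n * vx t = gy + Fy) :
    HasDerivAt (fun s ↦ 2 * V s - vx s ^ 2 - vy s ^ 2) (-2 * (vx t * Fx + vy t * Fy)) t := by
  have hderiv := ((hV.const_mul 2).fun_sub (hvx.fun_pow 2)).fun_sub (hvy.fun_pow 2)
  refine hderiv.congr_deriv ?_
  linear_combination -2 * vx t * heqx - 2 * vy t * heqy

theorem stmt_3_general {μ q₁ A₂ n x'' y'' Fx Fy t : ℝ} {x y x' y' r₁ r₂ C : ℝ → ℝ}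
    (hx : HasDerivAt x (x' t) t) (hx' : HasDerivAt x' x'' t)
    (hy : HasDerivAt y (y' t) t) (hy' : HasDerivAt y' y'' t)
    (hr₁ : ∀ s, r₁ s = √((x s + μ) ^ 2 + y s ^ 2))
    (hr₂ : ∀ s, r₂ s = √((x s + μ - 1) ^ 2 + y s ^ 2))
    (hr₁pos : 0 < r₁ t) (hr₂pos : 0 < r₂ t)
    (heqx : x'' - 2 * n * y' t =
      n ^ 2 * x t - (1 - μ) * q₁ * (x t + μ) / r₁ t ^ 3 - μ * (x t + μ - 1) / r₂ t ^ 3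
        - 3 / 2 * μ * A₂ * (x t + μ - 1) / r₂ t ^ 5 + Fx)
    (heqy : y'' + 2 * n * x' t =
      n ^ 2 * y t - (1 - μ) * q₁ * y t / r₁ t ^ 3 - μ * y t / r₂ t ^ 3
        - 3 / 2 * μ * A₂ * y t / r₂ t ^ 5 + Fy)
    (hC : ∀ s, C s =
      2 * (n ^ 2 / 2 * (x s ^ 2 + y s ^ 2) + (1 - μ) * q₁ / r₁ s + μ / r₂ s
          + μ * A₂ / (2 * r₂ s ^ 3))
        - x' s ^ 2 - y' s ^ 2) :
    HasDerivAt C (-2 * (x' t * Fx + y' t * Fy)) t := by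
  have hC_eq : C = fun s ↦
      2 * effectivePotential μ q₁ A₂ n (x s) (y s) - x' s ^ 2 - y' s ^ 2 := by
    funext s
    rw [hC, hr₁, hr₂, effectivePotential]
  rw [hC_eq]
  have hU := hasDerivAt_effectivePotential q₁ A₂ n hx hy (hr₁ t) (hr₂ t) hr₁pos hr₂pos
  exact hasDerivAt_jacobi hU hx' hy' heqx heqy

/-- The Jacobi function C(t) = 2U₁(x(t),y(t)) − ẋ(t)² − ẏ(t)² of the generalized
photogravitational restricted three-body problem with Poynting–Robertson drag
satisfies C′(t) = −2(ẋ F_x + ẏ F_y). -/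
theorem stmt_3 (μ q₁ A₂ n W₁ : ℝ) (hμ : μ ∈ Set.Ioo (0 : ℝ) 1)
    (x y x' y' x'' y'' : ℝ → ℝ)
    (hx : ∀ t, HasDerivAt x (x' t) t) (hx' : ∀ t, HasDerivAt x' (x'' t) t)
    (hy : ∀ t, HasDerivAt y (y' t) t) (hy' : ∀ t, HasDerivAt y' (y'' t) t)
    (r₁ r₂ Fx Fy C : ℝ → ℝ)
    (hr₁ : ∀ t, r₁ t = Real.sqrt ((x t + μ) ^ 2 + (y t) ^ 2))
    (hr₂ : ∀ t, r₂ t = Real.sqrt ((x t + μ - 1) ^ 2 + (y t) ^ 2))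
    (hr₁pos : ∀ t, r₁ t > 0) (hr₂pos : ∀ t, r₂ t > 0)
    (hFx : ∀ t, Fx t = -(W₁ / (r₁ t) ^ 2) *
      ((x t + μ) * ((x t + μ) * x' t + y t * y' t) / (r₁ t) ^ 2 + x' t - n * y t))
    (hFy : ∀ t, Fy t = -(W₁ / (r₁ t) ^ 2) *
      (y t * ((x t + μ) * x' t + y t * y' t) / (r₁ t) ^ 2 + y' t + n * (x t + μ)))
    (heqx : ∀ t, x'' t - 2 * n * y' t =
      n ^ 2 * x t - (1 - μ) * q₁ * (x t + μ) / (r₁ t) ^ 3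
        - μ * (x t + μ - 1) / (r₂ t) ^ 3
        - 3 / 2 * μ * A₂ * (x t + μ - 1) / (r₂ t) ^ 5 + Fx t)
    (heqy : ∀ t, y'' t + 2 * n * x' t =
      n ^ 2 * y t - (1 - μ) * q₁ * y t / (r₁ t) ^ 3
        - μ * y t / (r₂ t) ^ 3
        - 3 / 2 * μ * A₂ * y t / (r₂ t) ^ 5 + Fy t)
    (hC : ∀ t, C t =
      2 * (n ^ 2 / 2 * ((x t) ^ 2 + (y t) ^ 2) + (1 - μ) * q₁ / r₁ t
            + μ / r₂ t + μ * A₂ / (2 * (r₂ t) ^ 3))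
        - (x' t) ^ 2 - (y' t) ^ 2) :
    ∀ t, HasDerivAt C (-2 * (x' t * Fx t + y' t * Fy t)) t :=
  fun t ↦ stmt_3_general (hx t) (hx' t) (hy t) (hy' t) hr₁ hr₂ (hr₁pos t) (hr₂pos t)
    (heqx t) (heqy t) hC
end

section
/- Let μ, q₁, A₂, n, W₁, x, y ∈ ℝ with r₁ := √((x+μ)² + y²) > 0 and r₂ := √((x+μ−1)² + y²) > 0. If (x,y) satisfies the equilibrium equations (E1) n²x − (1−μ)q₁(x+μ)/r₁³ − μ(x+μ−1)/r₂³ − (3/2)μA₂(x+μ−1)/r₂⁵ + nW₁y/r₁² = 0 and (E2) n²y − (1−μ)q₁y/r₁³ − μy/r₂³ − (3/2)μA₂y/r₂⁵ − nW₁(x+μ)/r₁² = 0, then {n² − (1/r₂³)(1 + 3A₂/(2r₂²))}·μ·y = n·W₁. -/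
/-!
The torque about the first primary, `(x + μ) * E2 - y * E1`, kills the central force of that
primary. The centrifugal force and the attraction of the second primary contribute multiples of
`y`, because the barycentre and the second primary lie on the axis through the first, while the
transverse drag contributes `n * W₁ / r₁ ^ 2 * ((x + μ) ^ 2 + y ^ 2) = n * W₁`.
-/

/-- The coefficient `κ` for which a body with oblateness coefficient `A` and mass parameter `m`
attracts a particle at displacement `z` and distance `r` in its equatorial plane with acceleration
`-m * κ * z`. -/
def oblateAttraction {K : Type*} [Field K] (A r : K) : K :=
  1 / r ^ 3 * (1 + 3 * A / (2 * r ^ 2))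

theorem mul_oblateAttraction_mul {K : Type*} [Field K] [CharZero K] (m A r z : K) :
    m * oblateAttraction A r * z = m * z / r ^ 3 + 3 / 2 * m * A * z / r ^ 5 := by
  unfold oblateAttraction
  ring

/-- Coordinates are centred at the first primary, with the barycentre at `(c, 0)` and the second
primary at `(d, 0)`; `ω` is the squared mean motion, `α` and `β` are the coefficients of the two
central forces, and `δ` is that of the transverse drag. -/
theorem torque_balance_of_equilibrium {R : Type*} [CommRing R] {ω α β δ c d X Y : R}
    (hX : ω * (X - c) - α * X - β * (X - d) + δ * Y = 0)
    (hY : ω * Y - α * Y - β * Y - δ * X = 0) :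
    (ω * c - β * d) * Y = δ * (X ^ 2 + Y ^ 2) := by
  linear_combination X * hY - Y * hX

/-- From the equilibrium equations of the generalized photogravitational restricted
three-body problem with Poynting–Robertson drag, one deduces
{n² − (1/r₂³)(1 + 3A₂/(2r₂²))}·μ·y = n·W₁. -/
theorem stmt_5 (μ q₁ A₂ n W₁ x y : ℝ)
    (r₁ r₂ : ℝ)
    (hr₁def : r₁ = Real.sqrt ((x + μ) ^ 2 + y ^ 2))
    (hr₂def : r₂ = Real.sqrt ((x + μ - 1) ^ 2 + y ^ 2))
    (hr₁ : r₁ > 0) (hr₂ : r₂ > 0)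
    (hE1 : n ^ 2 * x - (1 - μ) * q₁ * (x + μ) / r₁ ^ 3
      - μ * (x + μ - 1) / r₂ ^ 3
      - 3 / 2 * μ * A₂ * (x + μ - 1) / r₂ ^ 5
      + n * W₁ * y / r₁ ^ 2 = 0)
    (hE2 : n ^ 2 * y - (1 - μ) * q₁ * y / r₁ ^ 3
      - μ * y / r₂ ^ 3
      - 3 / 2 * μ * A₂ * y / r₂ ^ 5
      - n * W₁ * (x + μ) / r₁ ^ 2 = 0) :
    (n ^ 2 - 1 / r₂ ^ 3 * (1 + 3 * A₂ / (2 * r₂ ^ 2))) * μ * y = n * W₁ := by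
  have hX : n ^ 2 * (x + μ - μ) - (1 - μ) * q₁ / r₁ ^ 3 * (x + μ)
      - μ * oblateAttraction A₂ r₂ * (x + μ - 1) + n * W₁ / r₁ ^ 2 * y = 0 := by
    linear_combination hE1 - mul_oblateAttraction_mul μ A₂ r₂ (x + μ - 1)
  have hY : n ^ 2 * y - (1 - μ) * q₁ / r₁ ^ 3 * y
      - μ * oblateAttraction A₂ r₂ * y - n * W₁ / r₁ ^ 2 * (x + μ) = 0 := by
    linear_combination hE2 - mul_oblateAttraction_mul μ A₂ r₂ y
  have hr₁_sq : r₁ ^ 2 = (x + μ) ^ 2 + y ^ 2 := by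
    rw [hr₁def, Real.sq_sqrt (by positivity)]
  calc (n ^ 2 - oblateAttraction A₂ r₂) * μ * y
      = (n ^ 2 * μ - μ * oblateAttraction A₂ r₂ * 1) * y := by ring
    _ = n * W₁ / r₁ ^ 2 * ((x + μ) ^ 2 + y ^ 2) := torque_balance_of_equilibrium hX hY
    _ = n * W₁ := by rw [← hr₁_sq, div_mul_cancel₀ _ (pow_ne_zero 2 hr₁.ne')]
end

section
/- Let μ, q₁, A₂, x, y ∈ ℝ and n, W₁ ∈ ℝ with n > 0, W₁ ≠ 0, n² = 1 + (3/2)A₂, r₁ := √((x+μ)² + y²) > 0 and r₂ := √((x+μ−1)² + y²) > 0. If (x,y) satisfies the equilibrium equations (E1) n²x − (1−μ)q₁(x+μ)/r₁³ − μ(x+μ−1)/r₂³ − (3/2)μA₂(x+μ−1)/r₂⁵ + nW₁y/r₁² = 0 and (E2) n²y − (1−μ)q₁y/r₁³ − μy/r₂³ − (3/2)μA₂y/r₂⁵ − nW₁(x+μ)/r₁² = 0, then r₂ ≠ 1; that is, nonzero Poynting–Robertson drag displaces the equilibrium points off the unit circle about the smaller primary. -/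
/-!
The attraction of the first primary is radial about that primary, so it exerts no torque there.
Taking the cross product of the equilibrium equations with the position `(x + μ, y)` relative to
that primary therefore leaves a balance between drag, second primary and centrifugal force,
`n W₁ = μ y (n² - 1 / r₂³ - (3 / 2) A₂ / r₂⁵)`.
The relation `n² = 1 + (3 / 2) A₂` says exactly that the right-hand side vanishes at `r₂ = 1`.
-/

/-- Here `g₁` and `g₂` are the attractions of the primaries at `(-μ, 0)` and `(1 - μ, 0)` per unit
of distance, and `d` is the coefficient of the transverse drag. -/
theorem drag_torque_eq_of_equilibrium {R : Type*} [CommRing R] {μ x y ω g₁ g₂ d : R}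
    (hx : ω * x - g₁ * (x + μ) - g₂ * (x + μ - 1) + d * y = 0)
    (hy : ω * y - g₁ * y - g₂ * y - d * (x + μ) = 0) :
    d * ((x + μ) ^ 2 + y ^ 2) = y * (μ * ω - g₂) := by
  linear_combination y * hx - (x + μ) * hy

theorem meanMotion_mul_drag_eq_of_equilibrium {K : Type*} [Field K]
    {μ q₁ A₂ x y n W₁ r₁ r₂ : K} (hr₁ : r₁ ≠ 0) (hr₁_sq : r₁ ^ 2 = (x + μ) ^ 2 + y ^ 2)
    (hE1 : n ^ 2 * x - (1 - μ) * q₁ * (x + μ) / r₁ ^ 3 - μ * (x + μ - 1) / r₂ ^ 3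
      - 3 / 2 * μ * A₂ * (x + μ - 1) / r₂ ^ 5 + n * W₁ * y / r₁ ^ 2 = 0)
    (hE2 : n ^ 2 * y - (1 - μ) * q₁ * y / r₁ ^ 3 - μ * y / r₂ ^ 3
      - 3 / 2 * μ * A₂ * y / r₂ ^ 5 - n * W₁ * (x + μ) / r₁ ^ 2 = 0) :
    n * W₁ = μ * y * (n ^ 2 - 1 / r₂ ^ 3 - 3 / 2 * A₂ / r₂ ^ 5) := by
  have torque_balance := drag_torque_eq_of_equilibrium (μ := μ) (x := x) (y := y) (ω := n ^ 2)
    (g₁ := (1 - μ) * q₁ / r₁ ^ 3) (g₂ := μ / r₂ ^ 3 + 3 / 2 * μ * A₂ / r₂ ^ 5)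
    (d := n * W₁ / r₁ ^ 2) (by linear_combination hE1) (by linear_combination hE2)
  rw [← hr₁_sq, div_mul_cancel₀ _ (pow_ne_zero 2 hr₁)] at torque_balance
  linear_combination torque_balance

/-- Nonzero Poynting–Robertson drag displaces the equilibrium points off the unit
circle about the smaller primary: at an equilibrium point with W₁ ≠ 0, r₂ ≠ 1. -/
theorem stmt_6 (μ q₁ A₂ x y n W₁ : ℝ) (hn : n > 0) (hW₁ : W₁ ≠ 0)
    (hn2 : n ^ 2 = 1 + 3 / 2 * A₂)
    (r₁ r₂ : ℝ)
    (hr₁def : r₁ = Real.sqrt ((x + μ) ^ 2 + y ^ 2))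
    (hr₂def : r₂ = Real.sqrt ((x + μ - 1) ^ 2 + y ^ 2))
    (hr₁ : r₁ > 0) (hr₂ : r₂ > 0)
    (hE1 : n ^ 2 * x - (1 - μ) * q₁ * (x + μ) / r₁ ^ 3
      - μ * (x + μ - 1) / r₂ ^ 3
      - 3 / 2 * μ * A₂ * (x + μ - 1) / r₂ ^ 5
      + n * W₁ * y / r₁ ^ 2 = 0)
    (hE2 : n ^ 2 * y - (1 - μ) * q₁ * y / r₁ ^ 3
      - μ * y / r₂ ^ 3
      - 3 / 2 * μ * A₂ * y / r₂ ^ 5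
      - n * W₁ * (x + μ) / r₁ ^ 2 = 0) :
    r₂ ≠ 1 := by
  rintro rfl
  have hr₁_sq : r₁ ^ 2 = (x + μ) ^ 2 + y ^ 2 := by
    rw [hr₁def, Real.sq_sqrt (by positivity)]
  have drag_eq_zero : n * W₁ = 0 := by
    linear_combination
      meanMotion_mul_drag_eq_of_equilibrium hr₁.ne' hr₁_sq hE1 hE2 + μ * y * hn2
  exact mul_ne_zero hn.ne' hW₁ drag_eq_zero
end

section
/- Let μ ∈ (0,1), A₂ ∈ ℝ, n > 0 with n² = 1 + (3/2)A₂, q₁ > 0, and set δ̄ = (q₁/n²)^{1/3}. Assume 0 < δ̄ < 2, W₁ = 0, and let x = δ̄²/2 − μ and y ∈ ℝ be any number with y² = δ̄² − δ̄⁴/4. Then r₁ := √((x+μ)² + y²) = δ̄, r₂ := √((x+μ−1)² + y²) = 1, and (x,y) satisfies both equilibrium equations (E1) n²x − (1−μ)q₁(x+μ)/r₁³ − μ(x+μ−1)/r₂³ − (3/2)μA₂(x+μ−1)/r₂⁵ = 0 and (E2) n²y − (1−μ)q₁y/r₁³ − μy/r₂³ − (3/2)μA₂y/r₂⁵ = 0.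 In particular, in the drag-free generalized photogravitational problem with an oblate smaller primary, the triangular equilibrium points lie at distance (q₁/n²)^{1/3} from the radiating primary and at unit distance from the oblate primary. -/
/-!
Because the barycentre is the origin, each coordinate of a position is the average, with weights
`1 - μ` and `μ`, of its displacements from the two primaries. Equilibrium therefore follows once
both attractions match the centrifugal coefficient: `q₁ / r₁³ = n²` and
`1 / r₂³ + (3/2) A₂ / r₂⁵ = n²`. The first says `r₁ = (q₁ / n²)^(1/3)`, and `r₂ = 1` solves the
second since `n² = 1 + (3/2) A₂`. The given coordinates are those of the points at these two
distances.
-/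

theorem sq_add_sq_eq_and_sub_one_sq_add_sq_eq_one_iff {K : Type*} [Field K] [NeZero (2 : K)]
    {u y r : K} :
    u ^ 2 + y ^ 2 = r ^ 2 ∧ (u - 1) ^ 2 + y ^ 2 = 1 ↔
      u = r ^ 2 / 2 ∧ y ^ 2 = r ^ 2 - (r ^ 2 / 2) ^ 2 := by
  constructor
  · rintro ⟨h₁, h₂⟩
    have hu : u = r ^ 2 / 2 := by
      rw [eq_div_iff two_ne_zero]
      linear_combination h₁ - h₂
    refine ⟨hu, ?_⟩
    rw [← hu]
    linear_combination h₁
  · rintro ⟨hu, hy⟩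
    have h₁ : u ^ 2 + y ^ 2 = r ^ 2 := by rw [hy, hu]; ring
    refine ⟨h₁, ?_⟩
    rw [eq_div_iff two_ne_zero] at hu
    linear_combination h₁ - hu

theorem mul_rpow_one_third_div_pow_three {a q : ℝ} (ha : a ≠ 0) (hqa : 0 ≤ q / a) :
    a * ((q / a) ^ ((1 : ℝ) / 3)) ^ 3 = q := by
  have hcube : ((q / a) ^ ((1 : ℝ) / 3)) ^ 3 = q / a := by
    rw [one_div]
    exact_mod_cast Real.rpow_inv_natCast_pow hqa three_ne_zero
  rw [hcube, mul_div_cancel₀ q ha]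

/-- One coordinate of the equilibrium equations: `z` is a coordinate of the position, `z₁` and `z₂`
are the corresponding coordinates of the displacements from the two primaries. -/
theorem centrifugal_sub_attraction_eq_zero {K : Type*} [Field K] {μ A₂ n q₁ r₁ r₂ z z₁ z₂ : K}
    (h₁ : q₁ / r₁ ^ 3 = n ^ 2) (h₂ : 1 / r₂ ^ 3 + 3 / 2 * A₂ / r₂ ^ 5 = n ^ 2)
    (hz : z = (1 - μ) * z₁ + μ * z₂) :
    n ^ 2 * z - (1 - μ) * q₁ * z₁ / r₁ ^ 3 - μ * z₂ / r₂ ^ 3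
      - 3 / 2 * μ * A₂ * z₂ / r₂ ^ 5 = 0 := by
  linear_combination n ^ 2 * hz - (1 - μ) * z₁ * h₁ - μ * z₂ * h₂

theorem stmt_7_general {μ A₂ n q₁ δ x y : ℝ} (hn2 : n ^ 2 = 1 + 3 / 2 * A₂)
    (hδ0 : 0 < δ) (hδ : n ^ 2 * δ ^ 3 = q₁)
    (hx : x = δ ^ 2 / 2 - μ) (hy : y ^ 2 = δ ^ 2 - δ ^ 4 / 4) :
    √((x + μ) ^ 2 + y ^ 2) = δ ∧
    √((x + μ - 1) ^ 2 + y ^ 2) = 1 ∧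
    n ^ 2 * x
      - (1 - μ) * q₁ * (x + μ) / √((x + μ) ^ 2 + y ^ 2) ^ 3
      - μ * (x + μ - 1) / √((x + μ - 1) ^ 2 + y ^ 2) ^ 3
      - 3 / 2 * μ * A₂ * (x + μ - 1) / √((x + μ - 1) ^ 2 + y ^ 2) ^ 5 = 0 ∧
    n ^ 2 * y
      - (1 - μ) * q₁ * y / √((x + μ) ^ 2 + y ^ 2) ^ 3
      - μ * y / √((x + μ - 1) ^ 2 + y ^ 2) ^ 3
      - 3 / 2 * μ * A₂ * y / √((x + μ - 1) ^ 2 + y ^ 2) ^ 5 = 0 := by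
  obtain ⟨hsq₁, hsq₂⟩ : (x + μ) ^ 2 + y ^ 2 = δ ^ 2 ∧ (x + μ - 1) ^ 2 + y ^ 2 = 1 :=
    sq_add_sq_eq_and_sub_one_sq_add_sq_eq_one_iff.mpr
      ⟨by linear_combination hx, by linear_combination hy⟩
  have hr₁ : √((x + μ) ^ 2 + y ^ 2) = δ := by rw [hsq₁, Real.sqrt_sq hδ0.le]
  have hr₂ : √((x + μ - 1) ^ 2 + y ^ 2) = 1 := by rw [hsq₂, Real.sqrt_one]
  have hradiating : q₁ / δ ^ 3 = n ^ 2 := (eq_div_of_mul_eq (by positivity) hδ).symm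
  have hoblate : 1 / 1 ^ 3 + 3 / 2 * A₂ / 1 ^ 5 = n ^ 2 := by linear_combination -hn2
  rw [hr₁, hr₂]
  exact ⟨rfl, rfl, centrifugal_sub_attraction_eq_zero hradiating hoblate (by ring),
    centrifugal_sub_attraction_eq_zero hradiating hoblate (by ring)⟩

/-- In the drag-free generalized photogravitational problem with an oblate smaller
primary, the triangular equilibrium points lie at distance δ̄ = (q₁/n²)^{1/3} from the
radiating primary and at unit distance from the oblate primary, and they satisfy both
equilibrium equations. -/
theorem stmt_7 (μ A₂ n q₁ : ℝ) (hμ : μ ∈ Set.Ioo (0 : ℝ) 1)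
    (hn : n > 0) (hn2 : n ^ 2 = 1 + 3 / 2 * A₂) (hq₁ : q₁ > 0)
    (W₁ : ℝ) (hW₁ : W₁ = 0)
    (δbar : ℝ) (hδbar : δbar = (q₁ / n ^ 2) ^ ((1 : ℝ) / 3))
    (hδ0 : 0 < δbar) (hδ2 : δbar < 2)
    (x y : ℝ) (hx : x = δbar ^ 2 / 2 - μ) (hy : y ^ 2 = δbar ^ 2 - δbar ^ 4 / 4) :
    Real.sqrt ((x + μ) ^ 2 + y ^ 2) = δbar ∧
    Real.sqrt ((x + μ - 1) ^ 2 + y ^ 2) = 1 ∧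
    n ^ 2 * x
      - (1 - μ) * q₁ * (x + μ) / (Real.sqrt ((x + μ) ^ 2 + y ^ 2)) ^ 3
      - μ * (x + μ - 1) / (Real.sqrt ((x + μ - 1) ^ 2 + y ^ 2)) ^ 3
      - 3 / 2 * μ * A₂ * (x + μ - 1) / (Real.sqrt ((x + μ - 1) ^ 2 + y ^ 2)) ^ 5 = 0 ∧
    n ^ 2 * y
      - (1 - μ) * q₁ * y / (Real.sqrt ((x + μ) ^ 2 + y ^ 2)) ^ 3
      - μ * y / (Real.sqrt ((x + μ - 1) ^ 2 + y ^ 2)) ^ 3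
      - 3 / 2 * μ * A₂ * y / (Real.sqrt ((x + μ - 1) ^ 2 + y ^ 2)) ^ 5 = 0 := by
  have hcube : n ^ 2 * δbar ^ 3 = q₁ :=
    hδbar ▸ mul_rpow_one_third_div_pow_three (by positivity) (by positivity)
  exact stmt_7_general hn2 hδ0 hcube hx hy
end

section
/- Let μ ∈ (0,1), q₁ > 0 with δ := q₁^{1/3} < 2, and let x₀ = δ²/2 − μ and y₀ ∈ ℝ be any number with y₀² = δ² − δ⁴/4. Then r₁ := √((x₀+μ)² + y₀²) = δ, r₂ := √((x₀+μ−1)² + y₀²) = 1, and (x₀,y₀) satisfies the photogravitational equilibrium equations x₀ − (1−μ)q₁(x₀+μ)/r₁³ − μ(x₀+μ−1)/r₂³ = 0 and y₀ − (1−μ)q₁y₀/r₁³ − μy₀/r₂³ = 0; i.e. (x₀,y₀) is a triangular equilibrium point of the photogravitational restricted three-body problem (the case A₂ = 0, W₁ = 0, n = 1). -/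
/-!
The origin is the barycentre of the primaries, so each coordinate of a point is the average, with
weights `1 - μ` and `μ`, of its displacements from the two primaries. Where the distances satisfy
`rᵢ³ = qᵢ`, the radiation factors cancel the inverse cubes: the attractions reduce to the same
average, and both equilibrium equations hold. The primaries being one unit apart, the distances
`δ₁` and `δ₂` are realised at a point with `x + μ = (δ₁² - δ₂² + 1) / 2`; a primary that does not
radiate has `δ₂ = 1`.
-/

lemma rpow_one_third_pow_three {q : ℝ} (hq : 0 ≤ q) : (q ^ ((1 : ℝ) / 3)) ^ 3 = q := by
  simpa only [one_div, Nat.cast_ofNat] using Real.rpow_inv_natCast_pow hq three_ne_zero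

lemma sqrt_sq_add_sq_eq_of_sq_eq_sub {d u y : ℝ} (hd : 0 ≤ d) (hy : y ^ 2 = d ^ 2 - u ^ 2) :
    Real.sqrt (u ^ 2 + y ^ 2) = d := by
  rw [hy, add_sub_cancel, Real.sqrt_sq hd]

lemma sub_weighted_div_sub_weighted_div_eq_zero {K : Type*} [Field K] {m q₁ q₂ z u v : K}
    (hq₁ : q₁ ≠ 0) (hq₂ : q₂ ≠ 0) (hz : z = (1 - m) * u + m * v) :
    z - (1 - m) * q₁ * u / q₁ - m * q₂ * v / q₂ = 0 := by
  rw [mul_right_comm, mul_div_cancel_right₀ _ hq₁, mul_right_comm, mul_div_cancel_right₀ _ hq₂, hz]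
  ring

/-- Here both primaries radiate, with factors `q₁` and `q₂`. -/
theorem stmt_8_general {μ q₁ q₂ δ₁ δ₂ x y : ℝ} (hδ₁ : 0 < δ₁) (hδ₂ : 0 < δ₂)
    (hq₁ : δ₁ ^ 3 = q₁) (hq₂ : δ₂ ^ 3 = q₂)
    (hx : x + μ = (δ₁ ^ 2 - δ₂ ^ 2 + 1) / 2) (hy : y ^ 2 = δ₁ ^ 2 - (x + μ) ^ 2) :
    Real.sqrt ((x + μ) ^ 2 + y ^ 2) = δ₁ ∧
    Real.sqrt ((x + μ - 1) ^ 2 + y ^ 2) = δ₂ ∧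
    x - (1 - μ) * q₁ * (x + μ) / (Real.sqrt ((x + μ) ^ 2 + y ^ 2)) ^ 3
      - μ * q₂ * (x + μ - 1) / (Real.sqrt ((x + μ - 1) ^ 2 + y ^ 2)) ^ 3 = 0 ∧
    y - (1 - μ) * q₁ * y / (Real.sqrt ((x + μ) ^ 2 + y ^ 2)) ^ 3
      - μ * q₂ * y / (Real.sqrt ((x + μ - 1) ^ 2 + y ^ 2)) ^ 3 = 0 := by
  have hr₁ : Real.sqrt ((x + μ) ^ 2 + y ^ 2) = δ₁ := sqrt_sq_add_sq_eq_of_sq_eq_sub hδ₁.le hy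
  have hr₂ : Real.sqrt ((x + μ - 1) ^ 2 + y ^ 2) = δ₂ :=
    sqrt_sq_add_sq_eq_of_sq_eq_sub hδ₂.le (by linear_combination hy - 2 * hx)
  have hq₁_ne : q₁ ≠ 0 := hq₁ ▸ (pow_pos hδ₁ 3).ne'
  have hq₂_ne : q₂ ≠ 0 := hq₂ ▸ (pow_pos hδ₂ 3).ne'
  rw [hr₁, hr₂, hq₁, hq₂]
  exact ⟨rfl, rfl, sub_weighted_div_sub_weighted_div_eq_zero hq₁_ne hq₂_ne (by ring),
    sub_weighted_div_sub_weighted_div_eq_zero hq₁_ne hq₂_ne (by ring)⟩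

/-- (x₀, y₀) with x₀ = δ²/2 − μ and y₀² = δ² − δ⁴/4, where δ = q₁^{1/3}, is a
triangular equilibrium point of the photogravitational restricted three-body problem
(the case A₂ = 0, W₁ = 0, n = 1): r₁ = δ, r₂ = 1 and both equilibrium equations hold. -/
theorem stmt_8 (μ q₁ : ℝ) (hμ : μ ∈ Set.Ioo (0 : ℝ) 1) (hq₁ : q₁ > 0)
    (δ : ℝ) (hδ : δ = q₁ ^ ((1 : ℝ) / 3)) (hδ2 : δ < 2)
    (x₀ y₀ : ℝ) (hx₀ : x₀ = δ ^ 2 / 2 - μ) (hy₀ : y₀ ^ 2 = δ ^ 2 - δ ^ 4 / 4) :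
    Real.sqrt ((x₀ + μ) ^ 2 + y₀ ^ 2) = δ ∧
    Real.sqrt ((x₀ + μ - 1) ^ 2 + y₀ ^ 2) = 1 ∧
    x₀ - (1 - μ) * q₁ * (x₀ + μ) / (Real.sqrt ((x₀ + μ) ^ 2 + y₀ ^ 2)) ^ 3
      - μ * (x₀ + μ - 1) / (Real.sqrt ((x₀ + μ - 1) ^ 2 + y₀ ^ 2)) ^ 3 = 0 ∧
    y₀ - (1 - μ) * q₁ * y₀ / (Real.sqrt ((x₀ + μ) ^ 2 + y₀ ^ 2)) ^ 3
      - μ * y₀ / (Real.sqrt ((x₀ + μ - 1) ^ 2 + y₀ ^ 2)) ^ 3 = 0 := by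
  simpa only [mul_one] using stmt_8_general (hδ ▸ Real.rpow_pos_of_pos hq₁ _) one_pos
    (hδ ▸ rpow_one_third_pow_three hq₁.le) (one_pow 3) (by rw [hx₀]; ring) (by rw [hy₀, hx₀]; ring)
end

section
/- Let μ ∈ (0,1), q₁, A₂ ∈ ℝ, n > 0 with n² = 1 + (3/2)A₂, and W₁ = 0. Suppose (x,y) ∈ ℝ² with y ≠ 0, r₁ := √((x+μ)² + y²) > 0 and r₂ := √((x+μ−1)² + y²) > 0 satisfies the drag-free equilibrium equations (E1) n²x − (1−μ)q₁(x+μ)/r₁³ − μ(x+μ−1)/r₂³ − (3/2)μA₂(x+μ−1)/r₂⁵ = 0 and (E2) n²y − (1−μ)q₁y/r₁³ − μy/r₂³ − (3/2)μA₂y/r₂⁵ = 0. Then r₂ satisfies n²r₂⁵ = r₂² + (3/2)A₂, and r₁ satisfies (1−μ)q₁/r₁³ = n² − μ/r₂³ − (3/2)μA₂/r₂⁵. -/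
/-!
At an equilibrium the centrifugal term `N • (x, y)` is a combination of the displacements
`(x + μ, y)` and `(x + μ - 1, y)` from the two primaries. Off the axis the second coordinate forces
the coefficients to add up to `N`. The barycentre being at the origin, the first coordinate then
gives the second primary the share `μ * N`. The mass `μ` cancels against the mass factor in its
attraction, which leaves an equation in `r₂` alone.
-/

theorem offAxis_balance_iff {R : Type*} [CommRing R] [NoZeroDivisors R] {μ N f₁ f₂ x y : R}
    (hy : y ≠ 0) :
    (N * x - f₁ * (x + μ) - f₂ * (x + μ - 1) = 0 ∧ N * y - f₁ * y - f₂ * y = 0) ↔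
      f₂ = μ * N ∧ f₁ = N - f₂ := by
  constructor
  · rintro ⟨hx, hy'⟩
    have hsum : f₁ = N - f₂ := mul_right_cancel₀ hy (by linear_combination -hy')
    have hshare : f₂ = μ * N := by linear_combination hx + (x + μ) * hsum
    exact ⟨hshare, hsum⟩
  · rintro ⟨hshare, hsum⟩
    exact ⟨by linear_combination hshare - (x + μ) * hsum, by linear_combination -y * hsum⟩

theorem oblate_attraction_eq_iff {K : Type*} [Field K] {N J r : K} (hr : r ≠ 0) :
    1 / r ^ 3 + J / r ^ 5 = N ↔ N * r ^ 5 = r ^ 2 + J := by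
  have hclear : 1 / r ^ 3 + J / r ^ 5 = (r ^ 2 + J) / r ^ 5 := by field_simp
  rw [hclear, div_eq_iff (pow_ne_zero 5 hr), eq_comm]

/-- The coefficient `f₁` of the attraction of the first primary stands for `(1 - μ) * q₁ / r₁ ^ 3`,
and `N` and `J` for `n ^ 2` and `3 / 2 * A₂`. -/
theorem stmt_10_general {K : Type*} [Field K] {μ N J f₁ r₂ x y : K}
    (hμ : μ ≠ 0) (hy : y ≠ 0) (hr₂ : r₂ ≠ 0) :
    (N * x - f₁ * (x + μ) - μ * (x + μ - 1) / r₂ ^ 3 - μ * J * (x + μ - 1) / r₂ ^ 5 = 0 ∧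
        N * y - f₁ * y - μ * y / r₂ ^ 3 - μ * J * y / r₂ ^ 5 = 0) ↔
      N * r₂ ^ 5 = r₂ ^ 2 + J ∧ f₁ = N - μ / r₂ ^ 3 - μ * J / r₂ ^ 5 := by
  have hbalance := offAxis_balance_iff (μ := μ) (N := N) (f₁ := f₁)
    (f₂ := μ * (1 / r₂ ^ 3 + J / r₂ ^ 5)) (x := x) hy
  rw [mul_right_inj' hμ, oblate_attraction_eq_iff hr₂] at hbalance
  convert hbalance using 3 <;> ring

/-- At a drag-free triangular equilibrium point (y ≠ 0) of the generalized
photogravitational problem, r₂ satisfies n²r₂⁵ = r₂² + (3/2)A₂ and r₁ satisfies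
(1−μ)q₁/r₁³ = n² − μ/r₂³ − (3/2)μA₂/r₂⁵. -/
theorem stmt_10 (μ q₁ A₂ n : ℝ) (hμ : μ ∈ Set.Ioo (0 : ℝ) 1)
    (hn : n > 0) (hn2 : n ^ 2 = 1 + 3 / 2 * A₂)
    (W₁ : ℝ) (hW₁ : W₁ = 0)
    (x y : ℝ) (hy : y ≠ 0)
    (r₁ r₂ : ℝ)
    (hr₁def : r₁ = Real.sqrt ((x + μ) ^ 2 + y ^ 2))
    (hr₂def : r₂ = Real.sqrt ((x + μ - 1) ^ 2 + y ^ 2))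
    (hr₁ : r₁ > 0) (hr₂ : r₂ > 0)
    (hE1 : n ^ 2 * x - (1 - μ) * q₁ * (x + μ) / r₁ ^ 3
      - μ * (x + μ - 1) / r₂ ^ 3
      - 3 / 2 * μ * A₂ * (x + μ - 1) / r₂ ^ 5 = 0)
    (hE2 : n ^ 2 * y - (1 - μ) * q₁ * y / r₁ ^ 3
      - μ * y / r₂ ^ 3
      - 3 / 2 * μ * A₂ * y / r₂ ^ 5 = 0) :
    n ^ 2 * r₂ ^ 5 = r₂ ^ 2 + 3 / 2 * A₂ ∧
    (1 - μ) * q₁ / r₁ ^ 3 = n ^ 2 - μ / r₂ ^ 3 - 3 / 2 * μ * A₂ / r₂ ^ 5 := by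
  have ⟨h₂, h₁⟩ := (stmt_10_general (N := n ^ 2) (J := 3 / 2 * A₂) (f₁ := (1 - μ) * q₁ / r₁ ^ 3)
    (x := x) hμ.1.ne' hy hr₂.ne').mp ⟨by linear_combination hE1, by linear_combination hE2⟩
  exact ⟨h₂, by linear_combination h₁⟩
end

section
/- Let μ ∈ (0,1), q₁ > 0, and suppose (x,y) ∈ ℝ² with y ≠ 0, r₁ := √((x+μ)² + y²) > 0 and r₂ := √((x+μ−1)² + y²) > 0 satisfies the photogravitational equilibrium equations x − (1−μ)q₁(x+μ)/r₁³ − μ(x+μ−1)/r₂³ = 0 and y − (1−μ)q₁y/r₁³ − μy/r₂³ = 0 (the case A₂ = 0, W₁ = 0, n = 1). Then r₂ = 1 and r₁ = q₁^{1/3}, and consequently x = q₁^{2/3}/2 − μ and y² = q₁^{2/3} − q₁^{4/3}/4. -/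
/-!
The barycentre of the primaries is the origin, so the position vector is `(1 - μ) v₁ + μ v₂`,
where `v₁`, `v₂` are the displacements from the primaries. Equilibrium equates it with
`(1 - μ) (q₁ / r₁³) v₁ + μ (1 / r₂³) v₂`. Off the axis `v₁` and `v₂` are linearly independent,
so the coefficients agree: `r₁³ = q₁` and `r₂³ = 1`. The coordinates follow by intersecting the
circles of radii `r₁` and `1` about the primaries.
-/

theorem linearIndependent_pair_of_common_snd {R : Type*} [CommRing R] [IsDomain R] {u v y : R}
    (huv : u ≠ v) (hy : y ≠ 0) : LinearIndependent R ![(u, y), (v, y)] := by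
  refine LinearIndependent.pair_iff.mpr fun s t hst => ?_
  obtain ⟨hfst, hsnd⟩ : s * u + t * v = 0 ∧ s * y + t * y = 0 := by simpa using hst
  have hsum : s + t = 0 := by
    apply mul_right_cancel₀ hy
    linear_combination hsnd
  have hs : s = 0 := by
    apply mul_right_cancel₀ (sub_ne_zero.mpr huv)
    linear_combination hfst - v * hsum
  exact ⟨hs, by simpa [hs] using hsum⟩

theorem force_coeffs_eq_one_of_equilibrium {R : Type*} [CommRing R] [IsDomain R]
    {μ a b x y : R} (hμ₀ : μ ≠ 0) (hμ₁ : μ ≠ 1) (hy : y ≠ 0)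
    (hfst : (1 - μ) * a * (x + μ) + μ * b * (x + μ - 1) = x)
    (hsnd : (1 - μ) * a * y + μ * b * y = y) : a = 1 ∧ b = 1 := by
  have hind : LinearIndependent R ![(x + μ, y), (x + μ - 1, y)] :=
    linearIndependent_pair_of_common_snd (Ne.symm (mt sub_eq_self.mp one_ne_zero)) hy
  have hbalance : ((1 - μ) * a) • (x + μ, y) + (μ * b) • (x + μ - 1, y) =
      (1 - μ) • (x + μ, y) + μ • (x + μ - 1, y) := by
    ext
    · simp only [Prod.fst_add, Prod.smul_fst, smul_eq_mul]
      linear_combination hfst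
    · simp only [Prod.snd_add, Prod.smul_snd, smul_eq_mul]
      linear_combination hsnd
  obtain ⟨hcoeff₁, hcoeff₂⟩ := hind.eq_of_pair hbalance
  exact ⟨(mul_eq_left₀ (sub_ne_zero.mpr hμ₁.symm)).mp hcoeff₁, (mul_eq_left₀ hμ₀).mp hcoeff₂⟩

theorem fst_eq_of_two_circles {K : Type*} [Field K] [NeZero (2 : K)] {u y d r s : K}
    (hd : d ≠ 0) (hr : r ^ 2 = u ^ 2 + y ^ 2) (hs : s ^ 2 = (u - d) ^ 2 + y ^ 2) :
    u = (r ^ 2 - s ^ 2 + d ^ 2) / (2 * d) := by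
  rw [eq_div_iff (mul_ne_zero two_ne_zero hd)]
  linear_combination hs - hr

theorem pow_rpow_natCast_div {r : ℝ} (hr : 0 ≤ r) {n : ℕ} (hn : n ≠ 0) (k : ℕ) :
    (r ^ n) ^ ((k : ℝ) / n) = r ^ k := by
  rw [← Real.rpow_natCast_mul hr, mul_div_cancel₀ _ (Nat.cast_ne_zero.mpr hn), Real.rpow_natCast]

theorem stmt_11_general {μ q₁ x y r₁ r₂ : ℝ} (hμ₀ : μ ≠ 0) (hμ₁ : μ ≠ 1) (hy : y ≠ 0)
    (hr₁def : r₁ = Real.sqrt ((x + μ) ^ 2 + y ^ 2))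
    (hr₂def : r₂ = Real.sqrt ((x + μ - 1) ^ 2 + y ^ 2))
    (hE1 : x - (1 - μ) * q₁ * (x + μ) / r₁ ^ 3 - μ * (x + μ - 1) / r₂ ^ 3 = 0)
    (hE2 : y - (1 - μ) * q₁ * y / r₁ ^ 3 - μ * y / r₂ ^ 3 = 0) :
    r₂ = 1 ∧ r₁ = q₁ ^ ((1 : ℝ) / 3) ∧
    x = q₁ ^ ((2 : ℝ) / 3) / 2 - μ ∧
    y ^ 2 = q₁ ^ ((2 : ℝ) / 3) - q₁ ^ ((4 : ℝ) / 3) / 4 := by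
  have hr₁ : 0 < r₁ := by rw [hr₁def]; positivity
  have hr₂ : 0 < r₂ := by rw [hr₂def]; positivity
  have hcircle₁ : r₁ ^ 2 = (x + μ) ^ 2 + y ^ 2 := by rw [hr₁def, Real.sq_sqrt (by positivity)]
  have hcircle₂ : r₂ ^ 2 = (x + μ - 1) ^ 2 + y ^ 2 := by rw [hr₂def, Real.sq_sqrt (by positivity)]
  obtain ⟨hcoeff₁, hcoeff₂⟩ : q₁ / r₁ ^ 3 = 1 ∧ 1 / r₂ ^ 3 = 1 :=
    force_coeffs_eq_one_of_equilibrium (x := x) hμ₀ hμ₁ hy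
      (by linear_combination -hE1) (by linear_combination -hE2)
  have hq₁ : q₁ = r₁ ^ 3 := eq_of_div_eq_one hcoeff₁
  have hr₂one : r₂ = 1 :=
    (pow_eq_one_iff_of_nonneg hr₂.le three_ne_zero).mp (eq_of_div_eq_one hcoeff₂).symm
  have hroot (k : ℕ) : q₁ ^ ((k : ℝ) / 3) = r₁ ^ k := by
    rw [hq₁]
    exact_mod_cast pow_rpow_natCast_div hr₁.le three_ne_zero k
  have hroot₁ : q₁ ^ ((1 : ℝ) / 3) = r₁ := by simpa using hroot 1
  have hroot₂ : q₁ ^ ((2 : ℝ) / 3) = r₁ ^ 2 := hroot 2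
  have hroot₄ : q₁ ^ ((4 : ℝ) / 3) = r₁ ^ 4 := hroot 4
  have hfst : x + μ = r₁ ^ 2 / 2 := by
    simpa [hr₂one] using fst_eq_of_two_circles one_ne_zero hcircle₁ hcircle₂
  rw [hroot₁, hroot₂, hroot₄]
  refine ⟨hr₂one, rfl, eq_sub_of_add_eq hfst, ?_⟩
  rw [hfst] at hcircle₁
  linear_combination -hcircle₁

/-- At a triangular equilibrium point (y ≠ 0) of the photogravitational restricted
three-body problem (A₂ = 0, W₁ = 0, n = 1), one has r₂ = 1 and r₁ = q₁^{1/3}, hence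
x = q₁^{2/3}/2 − μ and y² = q₁^{2/3} − q₁^{4/3}/4. -/
theorem stmt_11 (μ q₁ : ℝ) (hμ : μ ∈ Set.Ioo (0 : ℝ) 1) (hq₁ : q₁ > 0)
    (x y : ℝ) (hy : y ≠ 0)
    (r₁ r₂ : ℝ)
    (hr₁def : r₁ = Real.sqrt ((x + μ) ^ 2 + y ^ 2))
    (hr₂def : r₂ = Real.sqrt ((x + μ - 1) ^ 2 + y ^ 2))
    (hr₁ : r₁ > 0) (hr₂ : r₂ > 0)
    (hE1 : x - (1 - μ) * q₁ * (x + μ) / r₁ ^ 3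
      - μ * (x + μ - 1) / r₂ ^ 3 = 0)
    (hE2 : y - (1 - μ) * q₁ * y / r₁ ^ 3 - μ * y / r₂ ^ 3 = 0) :
    r₂ = 1 ∧ r₁ = q₁ ^ ((1 : ℝ) / 3) ∧
    x = q₁ ^ ((2 : ℝ) / 3) / 2 - μ ∧
    y ^ 2 = q₁ ^ ((2 : ℝ) / 3) - q₁ ^ ((4 : ℝ) / 3) / 4 := by
  exact stmt_11_general hμ.1.ne' hμ.2.ne hy hr₁def hr₂def hE1 hE2
end
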